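/- Let p be a prime, q a power of p, M ≥ 2 an integer, and f a SCIM polynomial of odd degree d over F_{q^2} such that f(x^M) has a SCIM factor g of degree d. Then C_g^M is conjugate in GL(d, F_{q^2}) to C_f; consequently there exists α ∈ U(d,q²) with α^M conjugate to C_f. -/

import Mathlib

open Polynomial Matrix

noncomputable section

/-- `f̃(t) = conj(f(0))⁻¹ · t^(deg f) · f̄(1/t)`, where the conjugation `σ` is applied
coefficientwise. -/
def tildePoly {F : Type} [Field F] (σ : F →+* F) (f : F[X]) : F[X] :=
  Polynomial.C (σ (f.coeff 0))⁻¹ * (f.map σ).reverse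

/-- A self-conjugate irreducible monic (SCIM) polynomial with nonzero constant term. -/
def IsSCIM {F : Type} [Field F] (σ : F →+* F) (f : F[X]) : Prop :=
  f.Monic ∧ Irreducible f ∧ f.coeff 0 ≠ 0 ∧ tildePoly σ f = f

/-- An `M̃`-power polynomial: a SCIM polynomial `f` such that `f(x^M)` has a SCIM factor of
degree `deg f`. -/
def IsMtildePowerPoly {F : Type} [Field F] (σ : F →+* F) (M : ℕ) (f : F[X]) : Prop :=
  IsSCIM σ f ∧ ∃ g : F[X], IsSCIM σ g ∧ g.natDegree = f.natDegree ∧ g ∣ f.comp (X ^ M)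

/-- `Ñ_M(q,d)`: the number of `M̃`-power SCIM polynomials of degree `d`. -/
def NtildeM {F : Type} [Field F] (σ : F →+* F) (M d : ℕ) : ℕ :=
  Nat.card {f : F[X] // IsMtildePowerPoly σ M f ∧ f.natDegree = d}

/-- An `M`-power polynomial: a monic irreducible `g` such that `g(x^M)` has an irreducible
factor of degree `deg g`. -/
def IsMPowerPoly {F : Type} [Field F] (M : ℕ) (g : F[X]) : Prop :=
  g.Monic ∧ Irreducible g ∧
    ∃ h : F[X], Irreducible h ∧ h.natDegree = g.natDegree ∧ h ∣ g.comp (X ^ M)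

open scoped Classical in
/-- `R̃_M(q,d)`: the number of unordered pairs `{g, g̃}` with `g` a monic irreducible
degree-`d` `M`-power polynomial and `g ≠ g̃`. -/
def RtildeM {F : Type} [Field F] (σ : F →+* F) (M d : ℕ) : ℕ :=
  Nat.card {P : Finset F[X] // ∃ g : F[X], IsMPowerPoly M g ∧ g.natDegree = d ∧
    g ≠ tildePoly σ g ∧ P = {g, tildePoly σ g}}

/-- `S̃'_M(d,q)`: the number of SCIM polynomials of degree `d` that are not `M̃`-power
polynomials. -/
def StildePrimeM {F : Type} [Field F] (σ : F →+* F) (M d : ℕ) : ℕ :=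
  Nat.card {f : F[X] // IsSCIM σ f ∧ f.natDegree = d ∧ ¬ IsMtildePowerPoly σ M f}

open scoped Classical in
/-- `S'_M(d,q)`: the number of unordered pairs `{g, g̃}` with `g` monic irreducible of
degree `d`, `g ≠ g̃`, and `g` not an `M`-power polynomial. -/
def SPrimeM {F : Type} [Field F] (σ : F →+* F) (M d : ℕ) : ℕ :=
  Nat.card {P : Finset F[X] // ∃ g : F[X], g.Monic ∧ Irreducible g ∧ g.natDegree = d ∧
    g ≠ tildePoly σ g ∧ ¬ IsMPowerPoly M g ∧ P = {g, tildePoly σ g}}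

/-- The anti-diagonal matrix `Λ_n` with all anti-diagonal entries `1`. -/
def antidiagMat (F : Type) [Field F] (n : ℕ) : Matrix (Fin n) (Fin n) F :=
  Matrix.of fun i j => if (i : ℕ) + (j : ℕ) = n - 1 then 1 else 0

/-- Membership in the unitary group `U(n,q²)`:
`A` invertible and `A · Λ_n · Āᵗ = Λ_n`, where `Ā` applies `σ` entrywise. -/
def IsUnitaryMat {F : Type} [Field F] (σ : F →+* F) {n : ℕ}
    (A : Matrix (Fin n) (Fin n) F) : Prop :=
  IsUnit A ∧ A * antidiagMat F n * (A.map σ)ᵀ = antidiagMat F n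

/-- The companion matrix of a polynomial of degree `d`. -/
def companionMat {F : Type} [Field F] (d : ℕ) (f : F[X]) : Matrix (Fin d) (Fin d) F :=
  Matrix.of fun i j =>
    if (j : ℕ) = d - 1 then -f.coeff i else if (i : ℕ) = (j : ℕ) + 1 then 1 else 0

/-- Conjugacy in the general linear group. -/
def ConjGL {F : Type} [Field F] {m : Type} [Fintype m] [DecidableEq m]
    (A B : Matrix m m F) : Prop :=
  ∃ P : Matrix m m F, IsUnit P ∧ B = P * A * P⁻¹

/-- Conjugacy in the unitary group. -/
def ConjU {F : Type} [Field F] (σ : F →+* F) {n : ℕ}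
    (A B : Matrix (Fin n) (Fin n) F) : Prop :=
  ∃ P : Matrix (Fin n) (Fin n) F, IsUnitaryMat σ P ∧ B = P * A * P⁻¹

/-- `A` is an `M`-th power in the unitary group. -/
def IsMPowerInU {F : Type} [Field F] (σ : F →+* F) (M : ℕ) {n : ℕ}
    (A : Matrix (Fin n) (Fin n) F) : Prop :=
  ∃ B : Matrix (Fin n) (Fin n) F, IsUnitaryMat σ B ∧ B ^ M = A

/-- `|U(n,q²)|`. -/
def cardU {F : Type} [Field F] (σ : F →+* F) (n : ℕ) : ℕ :=
  Nat.card {A : Matrix (Fin n) (Fin n) F // IsUnitaryMat σ A}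

/-- Number of conjugacy classes of separable matrices in `U(n,q²)` that are `M`-th powers. -/
def numSepPowerClasses {F : Type} [Field F] (σ : F →+* F) (M n : ℕ) : ℕ :=
  Nat.card (Quot (fun A B : {A : Matrix (Fin n) (Fin n) F // IsUnitaryMat σ A ∧
    Squarefree (Matrix.charpoly A) ∧ IsMPowerInU σ M A} => ConjU σ A.1 B.1))

/-- Number of separable matrices in `U(n,q²)` that are `M`-th powers. -/
def numSepPowerElts {F : Type} [Field F] (σ : F →+* F) (M n : ℕ) : ℕ :=
  Nat.card {A : Matrix (Fin n) (Fin n) F // IsUnitaryMat σ A ∧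
    Squarefree (Matrix.charpoly A) ∧ IsMPowerInU σ M A}

/-- Number of conjugacy classes of cyclic matrices in `U(n,q²)` that are `M`-th powers. -/
def numCycPowerClasses {F : Type} [Field F] (σ : F →+* F) (M n : ℕ) : ℕ :=
  Nat.card (Quot (fun A B : {A : Matrix (Fin n) (Fin n) F // IsUnitaryMat σ A ∧
    minpoly F A = Matrix.charpoly A ∧ IsMPowerInU σ M A} => ConjU σ A.1 B.1))

/-- Number of cyclic matrices in `U(n,q²)` that are `M`-th powers. -/
def numCycPowerElts {F : Type} [Field F] (σ : F →+* F) (M n : ℕ) : ℕ :=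
  Nat.card {A : Matrix (Fin n) (Fin n) F // IsUnitaryMat σ A ∧
    minpoly F A = Matrix.charpoly A ∧ IsMPowerInU σ M A}

/-- Number of conjugacy classes of semisimple matrices in `U(n,q²)` that are `M`-th powers. -/
def numSSPowerClasses {F : Type} [Field F] (σ : F →+* F) (M n : ℕ) : ℕ :=
  Nat.card (Quot (fun A B : {A : Matrix (Fin n) (Fin n) F // IsUnitaryMat σ A ∧
    Squarefree (minpoly F A) ∧ IsMPowerInU σ M A} => ConjU σ A.1 B.1))

/-- Number of semisimple matrices in `U(n,q²)` that are `M`-th powers. -/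
def numSSPowerElts {F : Type} [Field F] (σ : F →+* F) (M n : ℕ) : ℕ :=
  Nat.card {A : Matrix (Fin n) (Fin n) F // IsUnitaryMat σ A ∧
    Squarefree (minpoly F A) ∧ IsMPowerInU σ M A}

/-- `U(f,n)`: block matrix with `n` diagonal blocks `C_f` (of size `k = deg f`) and
identity blocks directly above the diagonal. -/
def blockJordan {F : Type} [Field F] (k n : ℕ) (f : F[X]) :
    Matrix (Fin n × Fin k) (Fin n × Fin k) F :=
  Matrix.of fun ai bj =>
    if ai.1 = bj.1 then companionMat k f ai.2 bj.2
    else if (bj.1 : ℕ) = (ai.1 : ℕ) + 1 then (if ai.2 = bj.2 then 1 else 0) else 0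

/-- `|U(m, q^{2d})| = q^{d·m(m−1)}·Π_{i=1}^m (q^{di} − (−1)^i)` as a rational number. -/
def cardUFormula (q d m : ℕ) : ℚ :=
  (q : ℚ) ^ (d * (m * (m - 1))) * ∏ i ∈ Finset.Icc 1 m, ((q : ℚ) ^ (d * i) - (-1 : ℚ) ^ i)

/-- `|GL(m, q^{2d})| = Π_{i=0}^{m−1} (q^{2dm} − q^{2di})` as a rational number. -/
def cardGLFormula (q d m : ℕ) : ℚ :=
  ∏ i ∈ Finset.range m, ((q : ℚ) ^ (2 * d * m) - (q : ℚ) ^ (2 * d * i))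

instance : TopologicalSpace (PowerSeries ℚ) := by
  unfold PowerSeries MvPowerSeries; infer_instance

/-- Krylov matrix. -/
def kry {F : Type} [Field F] {d : ℕ} (B : Matrix (Fin d) (Fin d) F) (v : Fin d → F) :
    Matrix (Fin d) (Fin d) F := Matrix.of fun i j => (B ^ (j : ℕ) *ᵥ v) i

lemma kry_mulVec {F : Type} [Field F] {d : ℕ} (B : Matrix (Fin d) (Fin d) F) (v w : Fin d → F) :
    kry B v *ᵥ w = (aeval B (∑ j : Fin d, Polynomial.C (w j) * X ^ (j : ℕ))) *ᵥ v := by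
  ext i
  simp [kry, Matrix.mulVec, dotProduct, map_sum, Matrix.sum_apply, Finset.sum_mul,
    Matrix.algebraMap_eq_diagonal]
  rw [Finset.sum_comm]
  refine Finset.sum_congr rfl fun x _ => Finset.sum_congr rfl fun y _ => ?_
  ring

lemma kry_isUnit {F : Type} [Field F] {d : ℕ} (B : Matrix (Fin d) (Fin d) F) (v : Fin d → F)
    (hv : v ≠ 0) (f : F[X]) (hf : Irreducible f) (hfd : f.natDegree = d)
    (hB : aeval B f = 0) : IsUnit (kry B v) := by
  rw [Matrix.isUnit_iff_isUnit_det, isUnit_iff_ne_zero]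
  intro h
  obtain ⟨w, hw, hw0⟩ := Matrix.exists_mulVec_eq_zero_iff.mpr h
  rw [kry_mulVec] at hw0
  set p : F[X] := ∑ j : Fin d, Polynomial.C (w j) * X ^ (j : ℕ) with hp
  have hdeg : p.degree < d := by
    exact Polynomial.degree_sum_fin_lt w
  have hp0 : p ≠ 0 := by
    intro h0
    apply hw
    ext k
    have := congrArg (fun r => r.coeff (k : ℕ)) h0
    simpa [hp, Polynomial.finsetSum_coeff, Polynomial.coeff_C_mul, Polynomial.coeff_X_pow,
      Fin.val_inj] using this
  have hcop : IsCoprime f p := by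
    rw [hf.coprime_iff_not_dvd]
    intro hdv
    have := Polynomial.degree_le_of_dvd hdv hp0
    rw [Polynomial.degree_eq_natDegree hf.ne_zero, hfd] at this
    exact absurd hdeg (not_lt.mpr this)
  obtain ⟨a, b, hab⟩ := hcop
  have := congrArg (fun r => aeval B r *ᵥ v) hab
  simp [hB, ← Matrix.mulVec_mulVec, hw0] at this
  exact hv this.symm

lemma mul_kry {F : Type} [Field F] {d : ℕ} (B : Matrix (Fin d) (Fin d) F) (v : Fin d → F)
    (f : F[X]) (hm : f.Monic) (hfd : f.natDegree = d)
    (hB : aeval B f = 0) : B * kry B v = kry B v * companionMat d f := by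
  ext i j
  have h1 : (B * kry B v) i j = (B ^ ((j : ℕ) + 1) *ᵥ v) i := by
    rw [pow_succ', ← Matrix.mulVec_mulVec]
    simp [kry, Matrix.mul_apply, Matrix.mulVec, dotProduct]
  rw [h1, Matrix.mul_apply]
  by_cases hj : (j : ℕ) = d - 1
  · have hd : (j : ℕ) + 1 = d := by omega
    rw [hd]
    have := congrArg (fun r => (r *ᵥ v) i) hB
    rw [Polynomial.aeval_eq_sum_range, Finset.sum_range_succ, hfd] at this
    have hl : f.coeff d = 1 := by rw [← hfd]; exact hm
    simp only [hl, one_smul, Matrix.add_mulVec, Matrix.zero_mulVec, Pi.add_apply, Pi.zero_apply,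
      Finset.sum_range, Matrix.sum_mulVec, Finset.sum_apply, Matrix.smul_mulVec, Pi.smul_apply,
      smul_eq_mul] at this
    simp only [kry, companionMat, Matrix.of_apply, hj, if_true]
    rw [eq_neg_of_add_eq_zero_right this, ← Finset.sum_neg_distrib]
    exact Finset.sum_congr rfl fun _ _ => by ring
  · have hlt : (j : ℕ) + 1 < d := by omega
    rw [Finset.sum_eq_single (⟨j + 1, hlt⟩ : Fin d)]
    · simp [kry, companionMat, hj]
    · intro b _ hb
      have : (b : ℕ) ≠ j + 1 := fun h => hb (Fin.ext h)
      simp [companionMat, hj, this]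
    · simp

lemma conj_of_aeval {F : Type} [Field F] {d : ℕ} (hd : 1 ≤ d) (B : Matrix (Fin d) (Fin d) F)
    (f : F[X]) (hm : f.Monic) (hf : Irreducible f) (hfd : f.natDegree = d)
    (hB : aeval B f = 0) : ConjGL B (companionMat d f) := by
  have hv : (Pi.single ⟨0, hd⟩ 1 : Fin d → F) ≠ 0 := by simp
  have hu := kry_isUnit B _ hv f hf hfd hB
  have hmul := mul_kry B (Pi.single ⟨0, hd⟩ 1) f hm hfd hB
  set P := kry B (Pi.single ⟨0, hd⟩ 1)
  have hdet := (Matrix.isUnit_iff_isUnit_det _).mp hu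
  refine ⟨P⁻¹, (Matrix.isUnit_nonsing_inv_iff).mpr hu, ?_⟩
  rw [Matrix.nonsing_inv_nonsing_inv _ hdet, mul_assoc, hmul, ← mul_assoc,
    Matrix.nonsing_inv_mul _ hdet, one_mul]

lemma companion_pow {F : Type} [Field F] {d : ℕ} (hd : 1 ≤ d) (f : F[X]) (i : ℕ) (hi : i < d) :
    companionMat d f ^ i *ᵥ (Pi.single ⟨0, hd⟩ 1 : Fin d → F) = Pi.single ⟨i, hi⟩ 1 := by
  induction i with
  | zero => rw [pow_zero, Matrix.one_mulVec]
  | succ i ih =>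
    rw [pow_succ', ← Matrix.mulVec_mulVec, ih (by omega)]
    ext k
    have : i ≠ d - 1 := by omega
    simp [companionMat, this, Pi.single_apply, Fin.ext_iff]

lemma aeval_companion {F : Type} [Field F] {d : ℕ} (hd : 1 ≤ d) (f : F[X]) (hm : f.Monic)
    (hfd : f.natDegree = d) : aeval (companionMat d f) f = 0 := by
  set A := companionMat d f with hA
  set e : Fin d → F := Pi.single ⟨0, hd⟩ 1 with he
  have hpd : A ^ d *ᵥ e = fun k : Fin d => - f.coeff (k : ℕ) := by
    have hd1 : A ^ d = A * A ^ (d - 1) := by rw [← pow_succ', Nat.sub_add_cancel hd]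
    rw [hd1, ← Matrix.mulVec_mulVec, companion_pow hd f (d - 1) (by omega)]
    ext k
    simp [hA, companionMat]
  have h0 : aeval A f *ᵥ e = 0 := by
    rw [Polynomial.aeval_eq_sum_range, Finset.sum_range_succ, hfd]
    have hl : f.coeff d = 1 := by rw [← hfd]; exact hm
    rw [hl, one_smul, Matrix.add_mulVec, hpd, Finset.sum_range, Matrix.sum_mulVec]
    ext k
    have : ∀ x : Fin d, A ^ (x : ℕ) *ᵥ e = Pi.single x 1 := fun x => companion_pow hd f x x.2
    simp [Finset.sum_apply, Matrix.smul_mulVec, this, Pi.single_apply]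
  apply Matrix.ext_of_mulVec_single
  intro k
  rw [← companion_pow hd f k k.2, Matrix.mulVec_mulVec]
  have : Commute (aeval A f) (A ^ (k : ℕ)) := by
    have h : A ^ (k : ℕ) = aeval A (X ^ (k : ℕ) : F[X]) := by simp
    rw [h]
    unfold Commute SemiconjBy
    rw [← map_mul, ← map_mul, mul_comm]
  rw [← hA, this.eq, ← Matrix.mulVec_mulVec, ← he, h0]
  simp

lemma aeval_reverse_inv {F : Type} [Field F] {d : ℕ} (A D : Matrix (Fin d) (Fin d) F)
    (hDA : D * A = 1) (p : F[X]) :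
    aeval D p.reverse = D ^ p.natDegree * aeval A p := by
  have hc : Commute D A := by
    unfold Commute SemiconjBy
    rw [hDA, mul_eq_one_comm.mp hDA]
  have hpow : ∀ k, D ^ k * A ^ k = 1 := fun k => by rw [← hc.mul_pow, hDA, one_pow]
  rw [Polynomial.aeval_eq_sum_range' (n := p.natDegree + 1)
    (Nat.lt_succ_of_le (Polynomial.reverse_natDegree_le p)), Polynomial.aeval_eq_sum_range,
    Finset.mul_sum, ← Finset.sum_range_reflect]
  refine Finset.sum_congr rfl fun i hi => ?_
  have hi' : i ≤ p.natDegree := Nat.lt_succ_iff.mp (Finset.mem_range.mp hi)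
  have e1 : p.natDegree + 1 - 1 - i = p.natDegree - i := by omega
  rw [e1, Polynomial.coeff_reverse, Polynomial.revAt_le (Nat.sub_le _ _),
    Nat.sub_sub_self hi', mul_smul_comm]
  congr 1
  conv_rhs => rw [← Nat.sub_add_cancel hi', pow_add, mul_assoc, hpow, mul_one]

lemma exists_anisotropic {F : Type} [Field F] [StarRing F] (he : ∃ e : F, star e ≠ e)
    {n : ℕ} (H : Matrix (Fin n) (Fin n) F)
    (x y : Fin n → F) (hxy : star x ⬝ᵥ H *ᵥ y ≠ 0) :
    ∃ a b : F, star (a • x + b • y) ⬝ᵥ H *ᵥ (a • x + b • y) ≠ 0 := by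
  by_contra! h
  obtain ⟨e, he⟩ := he
  have h10 := h 1 0
  have h01 := h 0 1
  have h11 := h 1 1
  have h1e := h 1 e
  simp only [star_add, star_smul, Matrix.mulVec_add, Matrix.mulVec_smul, add_dotProduct,
    dotProduct_add, smul_dotProduct, dotProduct_smul, smul_eq_mul, star_one, star_zero,
    one_mul, zero_mul, mul_zero, add_zero, zero_add] at h10 h01 h11 h1e
  rw [h10, h01] at h11 h1e
  simp only [mul_zero, add_zero, zero_add] at h11 h1e
  have h2 : star y ⬝ᵥ H *ᵥ x = - (star x ⬝ᵥ H *ᵥ y) := by linear_combination h11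
  rw [h2] at h1e
  have h3 : (star e - e) * (star x ⬝ᵥ H *ᵥ y) = 0 := by linear_combination -h1e
  rcases mul_eq_zero.mp h3 with h | h
  · exact he (sub_eq_zero.mp h)
  · exact hxy h

lemma form_symm {F : Type} [Field F] [StarRing F] {n : ℕ} (H : Matrix (Fin n) (Fin n) F)
    (hH : Hᴴ = H) (x y : Fin n → F) : star (star x ⬝ᵥ H *ᵥ y) = star y ⬝ᵥ H *ᵥ x := by
  rw [Matrix.star_dotProduct, star_star, Matrix.star_mulVec, hH, ← Matrix.dotProduct_mulVec]

lemma exists_orthonormal {F : Type} [Field F] [StarRing F] (he : ∃ e : F, star e ≠ e)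
    (hN : ∀ a : F, star a = a → a ≠ 0 → ∃ c : F, star c * c = a)
    {n : ℕ} (H : Matrix (Fin n) (Fin n) F) (hH : Hᴴ = H) (hu : IsUnit H) (k : ℕ) (hk : k ≤ n) :
    ∃ v : Fin k → (Fin n → F), ∀ i j, star (v i) ⬝ᵥ H *ᵥ v j = if i = j then 1 else 0 := by
  induction k with
  | zero => exact ⟨fun i => i.elim0, fun i => i.elim0⟩
  | succ k ih =>
    obtain ⟨v, hv⟩ := ih (by omega)
    let φ : (Fin n → F) →ₗ[F] (Fin k → F) :=
      Matrix.mulVecLin ((Matrix.of fun i => star (v i)) * H)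
    have hφ : ∀ x i, φ x i = star (v i) ⬝ᵥ H *ᵥ x := by
      intro x i
      simp only [φ, Matrix.mulVecLin_apply, ← Matrix.mulVec_mulVec]
      rfl
    have hker : LinearMap.ker φ ≠ ⊥ := LinearMap.ker_ne_bot_of_finrank_lt (by simp; omega)
    obtain ⟨x, hx, hx0⟩ := (Submodule.ne_bot_iff _).mp hker
    have hx' : ∀ i, star (v i) ⬝ᵥ H *ᵥ x = 0 := fun i => by
      rw [← hφ, LinearMap.mem_ker.mp hx]; rfl
    have hx'' : ∀ i, star x ⬝ᵥ H *ᵥ v i = 0 := fun i => by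
      rw [← form_symm H hH, hx', star_zero]
    obtain ⟨y, hy⟩ : ∃ y, star x ⬝ᵥ H *ᵥ y ≠ 0 := by
      by_contra! h
      apply hx0
      have h2 : star x = 0 := by
        apply dotProduct_eq_zero
        intro w
        obtain ⟨y, rfl⟩ := (Matrix.mulVec_surjective_iff_isUnit.mpr hu) w
        exact h y
      simpa using h2
    set z := y - ∑ i, (star (v i) ⬝ᵥ H *ᵥ y) • v i with hz
    have hzv : ∀ i, star (v i) ⬝ᵥ H *ᵥ z = 0 := by
      intro i
      simp [hz, Matrix.mulVec_sub, Matrix.mulVec_sum, Matrix.mulVec_smul, dotProduct_sum, hv]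
    have hxz : star x ⬝ᵥ H *ᵥ z ≠ 0 := by
      simpa [hz, Matrix.mulVec_sub, Matrix.mulVec_sum, Matrix.mulVec_smul, dotProduct_sum, hx'']
        using hy
    obtain ⟨a, b, hab⟩ := exists_anisotropic he H x z hxz
    set w := a • x + b • z with hw
    have hwv : ∀ i, star (v i) ⬝ᵥ H *ᵥ w = 0 := by
      intro i
      simp [hw, Matrix.mulVec_add, Matrix.mulVec_smul, hx', hzv]
    obtain ⟨c, hc⟩ := hN (star w ⬝ᵥ H *ᵥ w)⁻¹ (by rw [star_inv₀, form_symm H hH])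
      (inv_ne_zero hab)
    have hwv2 : ∀ i, star (v i) ⬝ᵥ H *ᵥ (c • w) = 0 := by
      intro i; rw [Matrix.mulVec_smul, dotProduct_smul, hwv, smul_zero]
    have hwv3 : ∀ i, star (c • w) ⬝ᵥ H *ᵥ (v i) = 0 := by
      intro i; rw [← form_symm H hH, hwv2, star_zero]
    have hww : star (c • w) ⬝ᵥ H *ᵥ (c • w) = 1 := by
      rw [star_smul, Matrix.mulVec_smul, dotProduct_smul, smul_dotProduct, smul_eq_mul,
        smul_eq_mul, ← mul_assoc, mul_comm c, hc, inv_mul_cancel₀ hab]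
    refine ⟨Fin.cons (c • w) v, ?_⟩
    intro i j
    refine Fin.cases ?_ (fun i => ?_) i <;> refine Fin.cases ?_ (fun j => ?_) j
    · simpa using hww
    · simpa [(Fin.succ_ne_zero j).symm] using hwv3 j
    · simpa using hwv2 i
    · simpa using hv i j

lemma exists_congr_one {F : Type} [Field F] [StarRing F] (he : ∃ e : F, star e ≠ e)
    (hN : ∀ a : F, star a = a → a ≠ 0 → ∃ c : F, star c * c = a)
    {n : ℕ} (H : Matrix (Fin n) (Fin n) F) (hH : Hᴴ = H) (hu : IsUnit H) :
    ∃ V : Matrix (Fin n) (Fin n) F, IsUnit V ∧ Vᴴ * H * V = 1 := by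
  obtain ⟨v, hv⟩ := exists_orthonormal he hN H hH hu n le_rfl
  have : (Matrix.of v)ᵀᴴ * H * (Matrix.of v)ᵀ = 1 := by
    ext i j
    rw [mul_assoc, Matrix.one_apply, ← hv i j]
    simp [Matrix.mul_apply, dotProduct, Matrix.mulVec]
  refine ⟨(Matrix.of v)ᵀ, ?_, this⟩
  exact IsUnit.of_mul_eq_one_right _ this

lemma norm_surj {F : Type} [Field F] [Fintype F] (q : ℕ) (hq : 2 ≤ q)
    (hF : Fintype.card F = q ^ 2) (a : F) (ha : a ^ q = a) (h0 : a ≠ 0) :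
    ∃ c : F, c ^ q * c = a := by
  classical
  obtain ⟨γ, hγ⟩ := IsCyclic.exists_generator (α := Fˣ)
  obtain ⟨k, hk⟩ := (mem_powers_iff_mem_zpowers.mpr (hγ (Units.mk0 a h0)))
  have hord : orderOf γ = q ^ 2 - 1 := by
    rw [orderOf_eq_card_of_forall_mem_zpowers hγ, Nat.card_eq_fintype_card,
      Fintype.card_units, hF]
  have h1 : (Units.mk0 a h0) ^ (q - 1) = 1 := by
    ext
    have : a ^ (q - 1) * a = 1 * a := by rw [← pow_succ, Nat.sub_add_cancel (by omega), ha, one_mul]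
    simpa using mul_right_cancel₀ h0 this
  simp only at hk
  rw [← hk, ← pow_mul] at h1
  have h2 := orderOf_dvd_of_pow_eq_one h1
  have h3 : q ^ 2 - 1 = (q + 1) * (q - 1) := by
    have := Nat.sq_sub_sq q 1
    simpa using this
  rw [hord, h3] at h2
  obtain ⟨m, rfl⟩ := Nat.dvd_of_mul_dvd_mul_right (by omega) h2
  refine ⟨(γ ^ m : Fˣ), ?_⟩
  have := congrArg Units.val hk
  simp only [Units.val_pow_eq_pow_val, Units.val_mk0] at this ⊢
  rw [← this, ← pow_succ, ← pow_mul, mul_comm]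

lemma exists_not_fixed {F : Type} [Field F] [Fintype F] (q : ℕ) (hq : 2 ≤ q)
    (hF : Fintype.card F = q ^ 2) : ∃ e : F, e ^ q ≠ e := by
  by_contra! h
  have h1 := FiniteField.X_pow_card_sub_X_natDegree_eq F (p := q) (by omega)
  have h2 := FiniteField.X_pow_card_sub_X_ne_zero F (p := q) (by omega)
  have := Polynomial.card_le_degree_of_subset_roots (p := (X ^ q - X : F[X])) (Z := Finset.univ)
    (by intro e _; rw [Polynomial.mem_roots h2]; simp [h e])
  rw [h1, Finset.card_univ, hF] at this
  nlinarith

lemma companion_unit {F : Type} [Field F] {d : ℕ} (A : Matrix (Fin d) (Fin d) F) (g : F[X])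
    (h0 : g.coeff 0 ≠ 0) (hA : aeval A g = 0) : IsUnit A := by
  have h1 := congrArg (aeval A) (Polynomial.X_mul_divX_add g)
  rw [map_add, map_mul, aeval_X, aeval_C, hA, Algebra.algebraMap_eq_smul_one] at h1
  have h2 : A * ((-(g.coeff 0)⁻¹) • aeval A g.divX) = 1 := by
    rw [mul_smul_comm, eq_neg_of_add_eq_zero_left h1, smul_neg, neg_smul, neg_neg, smul_smul,
      inv_mul_cancel₀ h0, one_smul]
  exact IsUnit.of_mul_eq_one _ h2

lemma aeval_conjT {F : Type} [Field F] [StarRing F] (σ : F →+* F) (hσ : ∀ x, σ x = star x)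
    {d : ℕ} (A : Matrix (Fin d) (Fin d) F) (g : F[X]) :
    aeval Aᴴ (g.map σ) = (aeval A g)ᴴ := by
  rw [Polynomial.aeval_eq_sum_range, Polynomial.aeval_eq_sum_range, Matrix.conjTranspose_sum,
    Polynomial.natDegree_map]
  refine Finset.sum_congr rfl fun i _ => ?_
  rw [Polynomial.coeff_map, hσ, Matrix.conjTranspose_smul, Matrix.conjTranspose_pow]

lemma exists_form {F : Type} [Field F] [StarRing F] (he : ∃ e : F, star e ≠ e)
    (σ : F →+* F) (hσ : ∀ x, σ x = star x) {d : ℕ} (hd : 1 ≤ d) (g : F[X]) (hm : g.Monic)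
    (hirr : Irreducible g) (h0 : g.coeff 0 ≠ 0) (htil : tildePoly σ g = g)
    (hgd : g.natDegree = d) :
    ∃ H : Matrix (Fin d) (Fin d) F, IsUnit H ∧ Hᴴ = H ∧
      (companionMat d g)ᴴ * H * companionMat d g = H := by
  have hA := aeval_companion hd g hm hgd
  set A := companionMat d g with hAdef
  have hAu : IsUnit A := companion_unit A g h0 hA
  have hAHu : IsUnit Aᴴ := by rw [← Matrix.star_eq_conjTranspose]; exact hAu.star
  have hAHd := (Matrix.isUnit_iff_isUnit_det _).mp hAHu
  have hD : aeval (Aᴴ)⁻¹ g = 0 := by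
    rw [← htil, tildePoly, map_mul,
      aeval_reverse_inv Aᴴ _ (Matrix.nonsing_inv_mul _ hAHd), aeval_conjT σ hσ, hA]
    simp
  obtain ⟨P, hP, hPe⟩ := conj_of_aeval hd _ g hm hirr hgd hD
  have hPd := (Matrix.isUnit_iff_isUnit_det _).mp hP
  -- the invariant form
  have hinv : Aᴴ * P⁻¹ * A = P⁻¹ := by
    rw [← hAdef] at hPe
    calc Aᴴ * P⁻¹ * A = Aᴴ * P⁻¹ * (P * (Aᴴ)⁻¹ * P⁻¹) := by rw [← hPe]
      _ = Aᴴ * (P⁻¹ * P) * (Aᴴ)⁻¹ * P⁻¹ := by simp only [mul_assoc]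
      _ = P⁻¹ := by
        rw [Matrix.nonsing_inv_mul _ hPd, mul_one, Matrix.mul_nonsing_inv _ hAHd, one_mul]
  have hQ : IsUnit P⁻¹ := Matrix.isUnit_nonsing_inv_iff.mpr hP
  set Q := P⁻¹ with hQdef
  have hinv2 : Aᴴ * Qᴴ * A = Qᴴ := by
    have := congrArg Matrix.conjTranspose hinv
    simpa [Matrix.conjTranspose_mul, mul_assoc] using this
  have hQ0 : Q ≠ 0 := by
    rintro h
    have : Nonempty (Fin d) := ⟨⟨0, hd⟩⟩
    rw [h] at hQ
    exact not_isUnit_zero hQ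
  obtain ⟨e, he⟩ : ∃ e : F, e • Q + star e • Qᴴ ≠ 0 := by
    by_contra! h
    obtain ⟨e, he⟩ := he
    have h1 := h 1
    have h2 := h e
    rw [star_one, one_smul, one_smul] at h1
    rw [eq_neg_of_add_eq_zero_right h1, smul_neg, ← sub_eq_add_neg, ← sub_smul] at h2
    rcases smul_eq_zero.mp h2 with h | h
    · exact he (sub_eq_zero.mp h).symm
    · exact hQ0 h
  set H := e • Q + star e • Qᴴ with hH
  have hHinv : Aᴴ * H * A = H := by
    rw [hH, mul_add, add_mul, mul_smul_comm, smul_mul_assoc, mul_smul_comm, smul_mul_assoc,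
      hinv, hinv2]
  refine ⟨H, ?_, ?_, hHinv⟩
  · rw [Matrix.isUnit_iff_isUnit_det, isUnit_iff_ne_zero]
    intro hdet
    obtain ⟨v, hv, hv0⟩ := Matrix.exists_mulVec_eq_zero_iff.mpr hdet
    have hk := kry_isUnit A v hv g hirr hgd hA
    have hpow : ∀ k : ℕ, H *ᵥ (A ^ k *ᵥ v) = 0 := by
      intro k
      induction k with
      | zero => simpa using hv0
      | succ k ih =>
        have h3 : Aᴴ *ᵥ (H *ᵥ (A ^ (k + 1) *ᵥ v)) = 0 := by
          rw [pow_succ', ← Matrix.mulVec_mulVec, Matrix.mulVec_mulVec, Matrix.mulVec_mulVec,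
            hHinv, ih]
        have := Matrix.mulVec_injective_iff_isUnit.mpr hAHu
        exact this (by rw [h3, Matrix.mulVec_zero])
    have hz : H * kry A v = 0 := by
      ext i j
      have := congrFun (hpow j) i
      simpa [kry, Matrix.mul_apply, Matrix.mulVec, dotProduct] using this
    exact he ((hk.mul_left_eq_zero).mp hz)
  · rw [hH]
    simp [Matrix.conjTranspose_add, Matrix.conjTranspose_smul, add_comm]

lemma antidiag_sq (F : Type) [Field F] (n : ℕ) : antidiagMat F n * antidiagMat F n = 1 := by
  ext i j
  rw [Matrix.mul_apply, Finset.sum_eq_single (Fin.rev i)]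
  · have h1 : (i : ℕ) + (Fin.rev i : ℕ) = n - 1 := by rw [Fin.val_rev]; omega
    have h2 : ((Fin.rev i : ℕ) + (j : ℕ) = n - 1) ↔ i = j := by
      rw [Fin.val_rev, Fin.ext_iff]; omega
    simp only [antidiagMat, Matrix.of_apply, h1, h2, if_true, one_mul, Matrix.one_apply]
  · intro b _ hb
    have : ¬ ((i : ℕ) + (b : ℕ) = n - 1) := by
      intro h; apply hb; rw [Fin.ext_iff, Fin.val_rev]; omega
    simp [antidiagMat, this]
  · simp

lemma antidiag_conj (F : Type) [Field F] [StarRing F] (n : ℕ) :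
    (antidiagMat F n)ᴴ = antidiagMat F n := by
  ext i j
  simp only [antidiagMat, Matrix.conjTranspose_apply, Matrix.of_apply, add_comm (j : ℕ)]
  split_ifs <;> simp

lemma aeval_conj_eq_zero {F : Type} [Field F] {d : ℕ} (A T S : Matrix (Fin d) (Fin d) F)
    (hTS : S * T = 1) (g : F[X]) (hA : aeval A g = 0) : aeval (T * A * S) g = 0 := by
  have hp : ∀ k : ℕ, (T * A * S) ^ k = T * A ^ k * S := by
    intro k
    induction k with
    | zero => simp [mul_eq_one_comm.mp hTS]
    | succ k ih =>
      rw [pow_succ, ih, pow_succ]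
      calc T * A ^ k * S * (T * A * S) = T * A ^ k * (S * T) * A * S := by simp only [mul_assoc]
        _ = _ := by rw [hTS]; simp only [mul_assoc, one_mul]
  have : aeval (T * A * S) g = T * aeval A g * S := by
    rw [Polynomial.aeval_eq_sum_range, Polynomial.aeval_eq_sum_range, Finset.mul_sum,
      Finset.sum_mul]
    refine Finset.sum_congr rfl fun i _ => ?_
    rw [hp, mul_smul_comm, smul_mul_assoc]
  rw [this, hA]; simp

lemma exists_unitary {F : Type} [Field F] [StarRing F] (he : ∃ e : F, star e ≠ e)
    (hN : ∀ a : F, star a = a → a ≠ 0 → ∃ c : F, star c * c = a)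
    (σ : F →+* F) (hσ : ∀ x, σ x = star x) {d : ℕ} (hd : 1 ≤ d) (g : F[X]) (hm : g.Monic)
    (hirr : Irreducible g) (h0 : g.coeff 0 ≠ 0) (htil : tildePoly σ g = g)
    (hgd : g.natDegree = d) :
    ∃ α : Matrix (Fin d) (Fin d) F, IsUnit α ∧ α * antidiagMat F d * αᴴ = antidiagMat F d ∧
      aeval α g = 0 := by
  obtain ⟨H, hHu, hHh, hHA⟩ := exists_form he σ hσ hd g hm hirr h0 htil hgd
  have hA := aeval_companion hd g hm hgd
  set A := companionMat d g
  obtain ⟨V, hVu, hV⟩ := exists_congr_one he hN H hHh hHu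
  obtain ⟨W, hWu, hW⟩ := exists_congr_one he hN (antidiagMat F d) (antidiag_conj F d)
    (IsUnit.of_mul_eq_one _ (antidiag_sq F d))
  set Λ := antidiagMat F d with hΛ
  obtain ⟨V', hV1, hV2⟩ : ∃ V', V * V' = 1 ∧ V' * V = 1 :=
    ⟨V⁻¹, Matrix.mul_nonsing_inv _ ((Matrix.isUnit_iff_isUnit_det _).mp hVu),
      Matrix.nonsing_inv_mul _ ((Matrix.isUnit_iff_isUnit_det _).mp hVu)⟩
  -- `β` is unitary for the standard form
  have hβ : (V' * A * V)ᴴ * (V' * A * V) = 1 := by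
    have e1 : H = V'ᴴ * V' := by
      have hc : V'ᴴ * Vᴴ = 1 := by rw [← Matrix.conjTranspose_mul, hV1, Matrix.conjTranspose_one]
      calc H = (V'ᴴ * Vᴴ) * H * (V * V') := by rw [hc, hV1, one_mul, mul_one]
        _ = V'ᴴ * (Vᴴ * H * V) * V' := by simp only [mul_assoc]
        _ = _ := by rw [hV, mul_one]
    calc (V' * A * V)ᴴ * (V' * A * V) = Vᴴ * (Aᴴ * (V'ᴴ * V') * A) * V := by
          simp only [Matrix.conjTranspose_mul, mul_assoc]
      _ = 1 := by rw [← e1, hHA, hV]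
  have hβ2 := mul_eq_one_comm.mp hβ
  have hβA : aeval (V' * A * V) g = 0 := aeval_conj_eq_zero A V' V hV1 g hA
  set β := V' * A * V
  -- `Wᴴ Λ` inverts `W`, so conjugate by `R = Λ W`
  have hR : Λ * W * (Λ * W)ᴴ = Λ := by
    have h1 : W * (Wᴴ * Λ) = 1 := mul_eq_one_comm.mp hW
    rw [Matrix.conjTranspose_mul, antidiag_conj, mul_assoc, h1, mul_one]
  have hS : Wᴴ * (Λ * W) = 1 := by rw [← mul_assoc, hW]
  have hS' : (Λ * W)ᴴ * W = 1 := by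
    rw [Matrix.conjTranspose_mul, antidiag_conj, hW]
  set R := Λ * W
  have hα0 : aeval (R * β * Wᴴ) g = 0 := aeval_conj_eq_zero β R Wᴴ hS g hβA
  refine ⟨R * β * Wᴴ, companion_unit _ g h0 hα0, ?_, hα0⟩
  calc R * β * Wᴴ * Λ * (R * β * Wᴴ)ᴴ = R * β * (Wᴴ * Λ * W) * βᴴ * Rᴴ := by
        simp only [Matrix.conjTranspose_mul, Matrix.conjTranspose_conjTranspose, mul_assoc]
    _ = R * (β * βᴴ) * Rᴴ := by rw [hW]; simp only [mul_assoc, one_mul]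
    _ = Λ := by rw [hβ2, mul_one, hR]

/-- if `f` is SCIM of odd degree `d` and `f(x^M)` has a SCIM factor `g` of
degree `d`, then `C_g^M` is conjugate in `GL(d, F_{q^2})` to `C_f`; consequently `C_f` has
an `M`-th root in `U(d,q²)` up to conjugacy. -/
theorem statement5 (p ℓ q : ℕ) (hp : p.Prime) (hℓ : 0 < ℓ) (hq : q = p ^ ℓ)
    (F : Type) [Field F] [Fintype F] (hF : Fintype.card F = q ^ 2)
    (σ : F →+* F) (hσ : ∀ x : F, σ x = x ^ q)
    (M : ℕ) (hM : 2 ≤ M) (d : ℕ) (hd : 1 ≤ d) (hodd : Odd d)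
    (f : F[X]) (hf : IsSCIM σ f) (hfd : f.natDegree = d)
    (g : F[X]) (hg : IsSCIM σ g) (hgd : g.natDegree = d) (hdvd : g ∣ f.comp (X ^ M)) :
    ConjGL (companionMat d g ^ M) (companionMat d f) ∧
      ∃ α : Matrix (Fin d) (Fin d) F, IsUnitaryMat σ α ∧
        ConjGL (α ^ M) (companionMat d f) := by
  obtain ⟨hfm, hfi, hf0, hft⟩ := hf
  obtain ⟨hgm, hgi, hg0, hgt⟩ := hg
  have hq2 : 2 ≤ q := by
    rw [hq]
    exact hp.two_le.trans (Nat.le_self_pow hℓ.ne' p)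
  have key : ∀ B : Matrix (Fin d) (Fin d) F, aeval B g = 0 →
      ConjGL (B ^ M) (companionMat d f) := by
    intro B hB
    apply conj_of_aeval hd _ f hfm hfi hfd
    have h1 : aeval B (f.comp (X ^ M)) = 0 := by
      obtain ⟨r, hr⟩ := hdvd
      rw [hr, map_mul, hB, zero_mul]
    rw [Polynomial.aeval_comp] at h1
    simpa using h1
  refine ⟨key _ (aeval_companion hd g hgm hgd), ?_⟩
  letI : StarRing F :=
    { star := fun x => σ x
      star_involutive := fun x => by
        change σ (σ x) = x
        rw [hσ, hσ, ← pow_mul, ← sq, ← hF, FiniteField.pow_card]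
      star_mul := fun x y => by
        change σ (x * y) = σ y * σ x
        rw [map_mul, mul_comm]
      star_add := fun x y => map_add σ x y }
  have hstar : ∀ x : F, σ x = star x := fun _ => rfl
  obtain ⟨α, hu, hα, hα0⟩ := exists_unitary
    (by obtain ⟨e, he⟩ := exists_not_fixed q hq2 hF
        exact ⟨e, by rw [← hstar, hσ]; exact he⟩)
    (by intro a ha h0
        rw [← hstar, hσ] at ha
        obtain ⟨c, hc⟩ := norm_surj q hq2 hF a ha h0
        exact ⟨c, by rw [← hstar, hσ]; exact hc⟩)
    σ hstar hd g hgm hgi hg0 hgt hgd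
  exact ⟨α, ⟨hu, hα⟩, key α hα0⟩
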